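/- Let r ≥ 1 and 0 ≤ p ≤ r, and let A be a p×r matrix of real numbers with A(k,ℓ) ≥ 0 for all k,ℓ and A(k,k) = 1 for all 1 ≤ k ≤ p. For 1 ≤ k ≤ p define N_k, D_k : ℂ^{r−1} → ℂ by N_k(τ) = Π_{i=k}^{r−1} τ_i and D_k(τ) = Σ_{j=1}^{r} A(k,j) · Π_{i=j}^{r−1} τ_i (empty products equal 1). Set δ_k = 1 if A(k,ℓ) = 0 for all ℓ > k and δ_k = 0 otherwise. Then there exist ε > 0 and a function g : ℂ^{r−1} → ℂ analytic on the open ball of radius ε centered at 0 such that g(τ)·Π_{k=1}^p D_k(τ) = Π_{k=1}^p N_k(τ) for all τ in that ball, and g(0) = Π_{k=1}^p δ_k. -/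

import Mathlib

/-! In the variables `τ_i = λ_i / λ_{i+1}`, the ratio `λ_j / λ_m` (`j ≤ m`) is the monomial
`τ_j ⋯ τ_{m-1}`. If `a_m` is the last nonzero coefficient of `b = ∑ a_j λ_j` and `k ≤ m`, then
`λ_k / b = (λ_k / λ_m) / (b / λ_m)`: normalising by `λ_m` cancels the monomial `τ_m ⋯ τ_{n-1}`
common to `λ_k / λ_n` and `b / λ_n`. The remaining denominator `b / λ_m` is a polynomial in `τ`
with constant term `a_m ≠ 0`, and the remaining numerator vanishes at `τ = 0` unless `k = m`. -/

section Monomials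

open Finset

variable {n : ℕ}

/-- The monomial `τ_j ⋯ τ_{m-1}`, which represents `λ_j / λ_m` for `j ≤ m ≤ n` when
`τ_i = λ_i / λ_{i+1}`. Indices start at `0`, and the product is `1` when `m ≤ j`. -/
def segmentProd {M : Type*} [CommMonoid M] (j m : ℕ) (τ : Fin n → M) : M :=
  ∏ i with j ≤ i.val ∧ i.val < m, τ i

section CommMonoid

variable {M : Type*} [CommMonoid M]

theorem segmentProd_last (j : ℕ) (τ : Fin n → M) :
    segmentProd j n τ = ∏ i with j ≤ i.val, τ i := by
  simp only [segmentProd, Fin.is_lt, and_true]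

theorem segmentProd_self (m : ℕ) (τ : Fin n → M) : segmentProd m m τ = 1 := by
  refine prod_eq_one fun i hi ↦ ?_
  simp only [mem_filter] at hi
  omega

theorem segmentProd_mul_segmentProd {j m l : ℕ} (hjm : j ≤ m) (hml : m ≤ l) (τ : Fin n → M) :
    segmentProd j m τ * segmentProd m l τ = segmentProd j l τ := by
  unfold segmentProd
  rw [← prod_union (by simp only [disjoint_left, mem_filter]; omega)]
  congr 1
  ext i
  simp only [mem_union, mem_filter, mem_univ, true_and]
  omega

end CommMonoid

theorem segmentProd_apply_zero_of_lt {M : Type*} [CommMonoidWithZero M] {j m : ℕ} (hjm : j < m)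
    (hmn : m ≤ n) : segmentProd j m (0 : Fin n → M) = 0 :=
  prod_eq_zero (i := ⟨j, hjm.trans_le hmn⟩) (by simp [hjm]) rfl

end Monomials

section LinearForms

open Finset

variable {R : Type*} [CommSemiring R] {n : ℕ}

/-- The polynomial `∑ j, a_j τ_j ⋯ τ_{m-1}`. It represents `(∑ j, a_j λ_j) / λ_m` provided that
`a_j = 0` for `j > m`; otherwise each such `j` contributes `a_j`. -/
def segmentForm (a : Fin (n + 1) → R) (m : ℕ) (τ : Fin n → R) : R :=
  ∑ j, a j * segmentProd j m τ

theorem segmentForm_mul_segmentProd {a : Fin (n + 1) → R} {m l : ℕ}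
    (ha : ∀ j : Fin (n + 1), m < j → a j = 0) (hml : m ≤ l) (τ : Fin n → R) :
    segmentForm a m τ * segmentProd m l τ = segmentForm a l τ := by
  unfold segmentForm
  rw [sum_mul]
  refine sum_congr rfl fun j _ ↦ ?_
  rcases le_or_gt j.val m with hjm | hmj
  · rw [mul_assoc, segmentProd_mul_segmentProd hjm hml]
  · simp only [ha j hmj, zero_mul]

theorem segmentForm_apply_zero {a : Fin (n + 1) → R} {m : Fin (n + 1)}
    (ha : ∀ j > m, a j = 0) : segmentForm a m 0 = a m := by
  unfold segmentForm
  rw [sum_eq_single_of_mem m (mem_univ m), segmentProd_self, mul_one]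
  intro j _ hjm
  rcases lt_or_gt_of_ne hjm with hlt | hgt
  · rw [segmentProd_apply_zero_of_lt hlt m.is_le, mul_zero]
  · rw [ha j hgt, zero_mul]

end LinearForms

section Quotient

variable {K : Type*} [Semifield K] {n : ℕ}

theorem segmentProd_div_segmentForm_mul {a : Fin (n + 1) → K} {k m l : ℕ} {τ : Fin n → K}
    (ha : ∀ j : Fin (n + 1), m < j → a j = 0) (hkm : k ≤ m) (hml : m ≤ l)
    (hτ : segmentForm a m τ ≠ 0) :
    segmentProd k m τ / segmentForm a m τ * segmentForm a l τ = segmentProd k l τ := by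
  rw [← segmentForm_mul_segmentProd ha hml, ← mul_assoc, div_mul_cancel₀ _ hτ,
    segmentProd_mul_segmentProd hkm hml]

open Classical in
theorem segmentProd_div_segmentForm_apply_zero {a : Fin (n + 1) → K} {k m : Fin (n + 1)}
    (hkm : k ≤ m) (hm : a m ≠ 0) (ha : ∀ j > m, a j = 0) :
    segmentProd k m (0 : Fin n → K) / segmentForm a m 0 =
      if ∀ l > k, a l = 0 then (a k)⁻¹ else 0 := by
  rw [segmentForm_apply_zero ha]
  rcases hkm.eq_or_lt with rfl | hlt
  · rw [segmentProd_self, if_pos ha, one_div]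
  · rw [segmentProd_apply_zero_of_lt hlt m.is_le, if_neg fun h ↦ hm (h m hlt), zero_div]

end Quotient

theorem exists_ge_ne_zero_forall_gt_eq_zero {α M : Type*} [Preorder α] [Finite α] [Zero M]
    {a : α → M} {k : α} (hk : a k ≠ 0) : ∃ m ≥ k, a m ≠ 0 ∧ ∀ j > m, a j = 0 := by
  obtain ⟨m, hkm, hm⟩ := (Set.toFinite {j | a j ≠ 0}).exists_le_maximal hk
  exact ⟨m, hkm, hm.prop, fun j hj ↦ not_not.1 fun h ↦ hm.not_gt h hj⟩

section Analytic

open Finset Filter Topology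

variable {𝕜 : Type*} [NontriviallyNormedField 𝕜] {n : ℕ}

theorem analyticAt_segmentProd (j m : ℕ) (τ : Fin n → 𝕜) : AnalyticAt 𝕜 (segmentProd j m) τ :=
  analyticAt_fun_prod _ fun i _ ↦
    (ContinuousLinearMap.proj (R := 𝕜) (φ := fun _ : Fin n ↦ 𝕜) i).analyticAt τ

theorem analyticAt_segmentForm (a : Fin (n + 1) → 𝕜) (m : ℕ) (τ : Fin n → 𝕜) :
    AnalyticAt 𝕜 (segmentForm a m) τ :=
  analyticAt_fun_sum _ fun j _ ↦ analyticAt_const.mul (analyticAt_segmentProd j m τ)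

open Classical in
theorem exists_analytic_quotient_segmentProd_segmentForm {a : Fin (n + 1) → 𝕜} {k : Fin (n + 1)}
    (hk : a k ≠ 0) :
    ∃ g : (Fin n → 𝕜) → 𝕜,
      (∀ᶠ τ in 𝓝 0, AnalyticAt 𝕜 g τ ∧ g τ * segmentForm a n τ = segmentProd k n τ) ∧
      g 0 = if ∀ l > k, a l = 0 then (a k)⁻¹ else 0 := by
  obtain ⟨m, hkm, hm, ha⟩ := exists_ge_ne_zero_forall_gt_eq_zero hk
  refine ⟨fun τ ↦ segmentProd k m τ / segmentForm a m τ, ?_,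
    segmentProd_div_segmentForm_apply_zero hkm hm ha⟩
  have hform_zero : segmentForm a m 0 ≠ 0 := by rwa [segmentForm_apply_zero ha]
  filter_upwards [(analyticAt_segmentForm a m 0).continuousAt.eventually_ne hform_zero] with τ hτ
  exact ⟨(analyticAt_segmentProd k m τ).fun_div (analyticAt_segmentForm a m τ) hτ,
    segmentProd_div_segmentForm_mul ha hkm m.is_le hτ⟩

open Classical in
theorem stmt3_general {ι : Type*} [Fintype ι] (A : ι → Fin (n + 1) → 𝕜) (κ : ι → Fin (n + 1))
    (hA : ∀ k, A k (κ k) ≠ 0) :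
    ∃ ε > (0 : ℝ), ∃ g : (Fin n → 𝕜) → 𝕜,
      AnalyticOnNhd 𝕜 g (Metric.ball 0 ε) ∧
      (∀ τ ∈ Metric.ball (0 : Fin n → 𝕜) ε,
        g τ * ∏ k, segmentForm (A k) n τ = ∏ k, segmentProd (κ k) n τ) ∧
      g 0 = ∏ k, if ∀ l > κ k, A k l = 0 then (A k (κ k))⁻¹ else 0 := by
  choose g hg hg_zero using fun k ↦ exists_analytic_quotient_segmentProd_segmentForm (hA k)
  obtain ⟨ε, hε, hball⟩ := Metric.eventually_nhds_iff_ball.1 (eventually_all.2 hg)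
  refine ⟨ε, hε, fun τ ↦ ∏ k, g k τ, fun τ hτ ↦ ?_, fun τ hτ ↦ ?_,
    prod_congr rfl fun k _ ↦ hg_zero k⟩
  · exact analyticAt_fun_prod _ fun k _ ↦ (hball τ hτ k).1
  · rw [← prod_mul_distrib]
    exact prod_congr rfl fun k _ ↦ (hball τ hτ k).2

end Analytic

open Finset in
/-- the quotient `∏_k N_k / ∏_k D_k` coming from
`γ(λ) = ∏_k λ_k/b_k(λ)` in the variables `τ_j = λ_j/λ_{j+1}` extends
analytically across the origin of `ℂ^{r-1}`, with value `∏_k δ_k` at `0`. -/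
theorem stmt3 (r p : ℕ) (hr : 1 ≤ r) (hpr : p ≤ r)
    (A : Fin p → Fin r → ℝ)
    (hA : ∀ k l, 0 ≤ A k l)
    (hdiag : ∀ k : Fin p, A k (Fin.castLE hpr k) = 1)
    (N D : Fin p → (Fin (r - 1) → ℂ) → ℂ)
    (hN : ∀ k τ, N k τ =
      ∏ i ∈ univ.filter fun i : Fin (r - 1) => (k : ℕ) ≤ (i : ℕ), τ i)
    (hD : ∀ k τ, D k τ = ∑ j : Fin r, (A k j : ℂ) *
      ∏ i ∈ univ.filter fun i : Fin (r - 1) => (j : ℕ) ≤ (i : ℕ), τ i) :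
    ∃ ε > (0 : ℝ), ∃ g : (Fin (r - 1) → ℂ) → ℂ,
      AnalyticOnNhd ℂ g (Metric.ball 0 ε) ∧
      (∀ τ ∈ Metric.ball (0 : Fin (r - 1) → ℂ) ε,
        g τ * ∏ k : Fin p, D k τ = ∏ k : Fin p, N k τ) ∧
      g 0 = ∏ k : Fin p,
        if ∀ l : Fin r, (k : ℕ) < (l : ℕ) → A k l = 0 then (1 : ℂ) else 0 := by
  obtain ⟨n, rfl⟩ := Nat.exists_eq_add_of_le' hr
  simpa [hN, hD, hdiag, segmentForm, segmentProd_last, Fin.lt_def] using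
    stmt3_general (fun k l ↦ (A k l : ℂ)) (Fin.castLE hpr) (by simp [hdiag])
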